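/- Let 0 ≤ r ≤ 8 and let β ∈ ℤ^{1+r} satisfy: β·β > 0, p_a(β) = 1, β·l ≥ 1 for every line class l, and β·C ≥ 0 for every conic class C. Then β = −K. -/

import Mathlib

/-!
Put `D = β + K`. Since `β·β + β·K` is always even, `p_a(β) = 1` says exactly `D·β = 0`, and
`D·l ≥ 0` for every line class `l`, because `K·l = -1`.

* For `r ≥ 2` these inequalities force `D·D ≥ 0` (`inter_self_nonneg`). The quadratic Cremona
  reflections preserve the set of line classes, hence the inequalities; applying one whenever
  `d < a_i + a_j + a_k` lowers the degree `d`, which stays nonnegative because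
  `D·(h - e_i - e_j) ≥ 0`. For a reduced class, `d ≥ a_i + a_j + a_k` for the three largest
  (nonnegative) multiplicities, and `∑ a_i² ≤ d²` follows since at most five others remain
  (`sum_sq_le_of_reduced`).
* By the Hodge index theorem for the form of signature `(1, r)`, in the shape of the
  Cauchy–Schwarz inequality, `D·β = 0`, `β·β > 0` and `D·D ≥ 0` give `D = 0` (`hodge_index`).

For `r ≤ 1` the equation `D·β = 0` is solved directly. When `r = 1` it reads
`(d - a - 1)(d + a - 2) = 2`, and `a ≥ 1` (from the line class `e_1`) together with
`d ≥ a` (from the conic class `h - e_1`) leaves only `d = 3`, `a = 1`.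
-/

/-- Intersection pairing on the Picard lattice of `S_r`, with classes written in
`(d; a_1, …, a_r)` coordinates (the class `d·h − ∑ a_i·e_i`):
`(d; a)·(d'; a') = d·d' − ∑ a_i·a_i'`. -/
def inter {r : ℕ} (x y : ℤ × (Fin r → ℤ)) : ℤ :=
  x.1 * y.1 - ∑ i, x.2 i * y.2 i

/-- The canonical class `K = (−3; −1, …, −1)` of `S_r`. -/
def Kcl (r : ℕ) : ℤ × (Fin r → ℤ) := (-3, fun _ => -1)

/-- A line class: `l·l = −1` and `(−K)·l = 1`. -/
def IsLine {r : ℕ} (l : ℤ × (Fin r → ℤ)) : Prop :=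
  inter l l = -1 ∧ inter (-(Kcl r)) l = 1

/-- A conic class: `C·C = 0` and `(−K)·C = 2`. -/
def IsConic {r : ℕ} (C : ℤ × (Fin r → ℤ)) : Prop :=
  inter C C = 0 ∧ inter (-(Kcl r)) C = 2

/-- Arithmetic genus `p_a(β) = β·(β+K)/2 + 1`. -/
def pa {r : ℕ} (β : ℤ × (Fin r → ℤ)) : ℤ :=
  inter β (β + Kcl r) / 2 + 1

section Pairing

variable {r : ℕ}

lemma inter_comm (x y : ℤ × (Fin r → ℤ)) : inter x y = inter y x := by
  simp [inter, mul_comm]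

lemma inter_add_right (x y z : ℤ × (Fin r → ℤ)) :
    inter x (y + z) = inter x y + inter x z := by
  simp only [inter, Prod.fst_add, Prod.snd_add, Pi.add_apply, mul_add, Finset.sum_add_distrib]
  ring

lemma inter_smul_right (c : ℤ) (x y : ℤ × (Fin r → ℤ)) :
    inter x (c • y) = c * inter x y := by
  simp only [inter, Prod.smul_fst, Prod.smul_snd, Pi.smul_apply, smul_eq_mul, mul_sub,
    Finset.mul_sum, mul_left_comm]

lemma inter_add_left (x y z : ℤ × (Fin r → ℤ)) :
    inter (x + y) z = inter x z + inter y z := by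
  rw [inter_comm, inter_add_right, inter_comm z x, inter_comm z y]

lemma inter_smul_left (c : ℤ) (x y : ℤ × (Fin r → ℤ)) :
    inter (c • x) y = c * inter x y := by
  rw [inter_comm, inter_smul_right, inter_comm]

lemma inter_neg_left (x y : ℤ × (Fin r → ℤ)) : inter (-x) y = -inter x y := by
  have := inter_smul_left (-1) x y
  simpa using this

/-- The class of the exceptional curve `e_i`; its `i`-th coordinate is `-1` in the convention
`d·h - ∑ a_i·e_i`. -/
def exc (i : Fin r) : ℤ × (Fin r → ℤ) := (0, Pi.single i (-1))

/-- The class `h - e_i - e_j` of the line through two of the blown-up points. -/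
def chord (i j : Fin r) : ℤ × (Fin r → ℤ) := (1, Pi.single i 1 + Pi.single j 1)

/-- The root `h - e_i - e_j - e_k`. -/
def cremonaRoot (i j k : Fin r) : ℤ × (Fin r → ℤ) :=
  (1, Pi.single i 1 + Pi.single j 1 + Pi.single k 1)

lemma inter_exc (x : ℤ × (Fin r → ℤ)) (i : Fin r) : inter x (exc i) = x.2 i := by
  simp [inter, exc, Pi.single_apply]

lemma inter_chord (x : ℤ × (Fin r → ℤ)) (i j : Fin r) :
    inter x (chord i j) = x.1 - x.2 i - x.2 j := by
  simp [inter, chord, Pi.single_apply, mul_add, Finset.sum_add_distrib]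
  ring

lemma inter_cremonaRoot (x : ℤ × (Fin r → ℤ)) (i j k : Fin r) :
    inter x (cremonaRoot i j k) = x.1 - x.2 i - x.2 j - x.2 k := by
  simp [inter, cremonaRoot, Pi.single_apply, mul_add, Finset.sum_add_distrib]
  ring

lemma isLine_exc (i : Fin r) : IsLine (exc i) := by
  constructor <;> rw [inter_exc] <;> simp [exc, Kcl]

lemma isLine_chord {i j : Fin r} (h : i ≠ j) : IsLine (chord i j) := by
  constructor <;> rw [inter_chord] <;> simp [chord, Kcl, h, h.symm]

/-- The reflection in `h - e_i - e_j - e_k`, that is, the action on classes of the quadratic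
Cremona transformation based at three of the points (for distinct indices). -/
def cremona (i j k : Fin r) (x : ℤ × (Fin r → ℤ)) : ℤ × (Fin r → ℤ) :=
  x + inter x (cremonaRoot i j k) • cremonaRoot i j k

lemma inter_cremona_left (i j k : Fin r) (x y : ℤ × (Fin r → ℤ)) :
    inter (cremona i j k x) y = inter x (cremona i j k y) := by
  simp only [cremona, inter_add_left, inter_add_right, inter_smul_left, inter_smul_right]
  rw [inter_comm (cremonaRoot i j k) y]
  ring

lemma inter_cremona_self {i j k : Fin r} (hij : i ≠ j) (hik : i ≠ k) (hjk : j ≠ k)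
    (x : ℤ × (Fin r → ℤ)) :
    inter (cremona i j k x) (cremona i j k x) = inter x x := by
  have h2 : inter (cremonaRoot i j k) (cremonaRoot i j k) = -2 := by
    rw [inter_cremonaRoot]
    simp [cremonaRoot, hij, hik, hjk, hij.symm, hik.symm, hjk.symm]
  simp only [cremona, inter_add_left, inter_add_right, inter_smul_left, inter_smul_right, h2]
  rw [inter_comm (cremonaRoot i j k) x]
  ring

lemma isLine_cremona {i j k : Fin r} (hij : i ≠ j) (hik : i ≠ k) (hjk : j ≠ k)
    {l : ℤ × (Fin r → ℤ)} (hl : IsLine l) : IsLine (cremona i j k l) := by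
  refine ⟨by rw [inter_cremona_self hij hik hjk, hl.1], ?_⟩
  have hK : inter (-(Kcl r)) (cremonaRoot i j k) = 0 := by
    rw [inter_cremonaRoot]
    simp [Kcl]
  rw [cremona, inter_add_right, inter_smul_right, hK, hl.2]
  simp

end Pairing

lemma sum_sq_le_of_reduced {r : ℕ} (h3 : 3 ≤ r) (hr : r ≤ 8) (d : ℤ) (a : Fin r → ℤ)
    (ha : ∀ i, 0 ≤ a i)
    (hd : ∀ i j k, i ≠ j → i ≠ k → j ≠ k → a i + a j + a k ≤ d) :
    ∑ i, a i * a i ≤ d * d := by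
  classical
  obtain ⟨i, hi, hi'⟩ := Finset.exists_max_image (Finset.univ : Finset (Fin r)) a
    (Finset.card_pos.mp (by simp; omega))
  have c1 : (Finset.univ.erase i).card = r - 1 := by
    rw [Finset.card_erase_of_mem hi]; simp
  obtain ⟨j, hj, hj'⟩ := Finset.exists_max_image (Finset.univ.erase i) a
    (Finset.card_pos.mp (by omega))
  have c2 : ((Finset.univ.erase i).erase j).card = r - 2 := by
    rw [Finset.card_erase_of_mem hj, c1]; omega
  obtain ⟨k, hk, hk'⟩ := Finset.exists_max_image ((Finset.univ.erase i).erase j) a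
    (Finset.card_pos.mp (by omega))
  have c3 : (((Finset.univ.erase i).erase j).erase k).card ≤ 5 := by
    rw [Finset.card_erase_of_mem hk, c2]; omega
  have hrest : ∑ t ∈ ((Finset.univ.erase i).erase j).erase k, a t * a t
      ≤ 5 * (a k * a k) := by
    have h := Finset.sum_le_card_nsmul (((Finset.univ.erase i).erase j).erase k)
      (fun t => a t * a t) (a k * a k) (fun t ht => by
        have := hk' t (Finset.mem_of_mem_erase ht)
        exact mul_le_mul this this (ha t) (ha k))
    rw [nsmul_eq_mul] at h
    have : ((((Finset.univ.erase i).erase j).erase k).card : ℤ) ≤ 5 := by exact_mod_cast c3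
    nlinarith [mul_self_nonneg (a k)]
  rw [← Finset.add_sum_erase _ _ hi, ← Finset.add_sum_erase _ _ hj,
    ← Finset.add_sum_erase _ _ hk]
  have hjk : a k ≤ a j := hj' k (Finset.mem_of_mem_erase hk)
  have hij : a j ≤ a i := hi' j (Finset.mem_univ j)
  simp only [Finset.mem_erase, Finset.mem_univ, and_true] at hj hk
  have hsum := hd i j k (Ne.symm hj) (Ne.symm hk.2) (Ne.symm hk.1)
  have h0 := ha k
  have hsq : (a i + a j + a k) * (a i + a j + a k) ≤ d * d :=
    mul_le_mul hsum hsum (by linarith) (by linarith)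
  have e1 : a k * a k ≤ a i * a j := mul_le_mul (by linarith) hjk h0 (by linarith)
  have e2 : a k * a k ≤ a i * a k := mul_le_mul (by linarith) le_rfl h0 (by linarith)
  have e3 : a k * a k ≤ a j * a k := mul_le_mul hjk le_rfl h0 (by linarith)
  have e4 : 0 ≤ a k * a k := mul_self_nonneg _
  linarith

/-- A class that is nonnegative on all line classes has nonnegative self-intersection, for
`3 ≤ r ≤ 8`. The induction is on a bound `n` for the degree, lowered by Cremona reflections. -/
lemma inter_self_nonneg_aux {r : ℕ} (h3 : 3 ≤ r) (hr : r ≤ 8) (n : ℕ) :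
    ∀ D : ℤ × (Fin r → ℤ), D.1 < n → (∀ l, IsLine l → 0 ≤ inter D l) → 0 ≤ inter D D := by
  induction n with
  | zero =>
    intro D hn hD
    exfalso
    have h1 := hD _ (isLine_exc ⟨0, by omega⟩)
    have h2 := hD _ (isLine_exc ⟨1, by omega⟩)
    have h := hD _ (isLine_chord (i := ⟨0, by omega⟩) (j := ⟨1, by omega⟩) (by simp))
    rw [inter_exc] at h1 h2
    rw [inter_chord] at h
    push_cast at hn
    linarith
  | succ n ih =>
    intro D hn hD
    by_cases hred : ∀ i j k, i ≠ j → i ≠ k → j ≠ k → D.2 i + D.2 j + D.2 k ≤ D.1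
    · have := sum_sq_le_of_reduced h3 hr D.1 D.2
        (fun i => by simpa [inter_exc] using hD _ (isLine_exc i)) hred
      simp only [inter]
      linarith
    · push Not at hred
      obtain ⟨i, j, k, hij, hik, hjk, hlt⟩ := hred
      rw [← inter_cremona_self hij hik hjk]
      refine ih _ ?_ fun l hl => ?_
      · have : (cremona i j k D).1 = D.1 + (D.1 - D.2 i - D.2 j - D.2 k) := by
          rw [cremona, inter_cremonaRoot]
          simp [cremonaRoot]
        push_cast at hn
        linarith
      · rw [inter_cremona_left]
        exact hD _ (isLine_cremona hij hik hjk hl)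

lemma inter_self_nonneg {r : ℕ} (h2 : 2 ≤ r) (hr : r ≤ 8) (D : ℤ × (Fin r → ℤ))
    (hD : ∀ l, IsLine l → 0 ≤ inter D l) : 0 ≤ inter D D := by
  rcases h2.eq_or_lt with rfl | h3
  · have h0 := hD _ (isLine_exc 0)
    have h1 := hD _ (isLine_exc 1)
    have h := hD _ (isLine_chord (i := 0) (j := 1) (by simp))
    rw [inter_exc] at h0 h1
    rw [inter_chord] at h
    simp only [inter, Fin.sum_univ_two]
    nlinarith [mul_nonneg h0 h1]
  · exact inter_self_nonneg_aux h3 hr (D.1 + 1).toNat D (by omega) hD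

lemma hodge_index {r : ℕ} {D β : ℤ × (Fin r → ℤ)} (hβ : 0 < inter β β)
    (hDβ : inter D β = 0) (hD : 0 ≤ inter D D) : D = 0 := by
  simp only [inter] at hβ hDβ hD
  have cs := Finset.sum_mul_sq_le_sq_mul_sq Finset.univ D.2 β.2
  simp only [pow_two] at cs
  have hv : 0 ≤ ∑ i, β.2 i * β.2 i := Finset.sum_nonneg fun i _ => mul_self_nonneg _
  have hp : D.1 = 0 := by
    by_contra hne
    have hpos : 0 < D.1 * D.1 := mul_self_pos.mpr hne
    have e : ∑ i, D.2 i * β.2 i = D.1 * β.1 := by linarith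
    rw [e] at cs
    nlinarith [mul_nonneg hD hv, mul_pos hpos hβ]
  have hu : ∑ i, D.2 i * D.2 i = 0 := by
    refine le_antisymm ?_ (Finset.sum_nonneg fun i _ => mul_self_nonneg _)
    rw [hp] at hD
    linarith
  rw [Finset.sum_eq_zero_iff_of_nonneg fun i _ => mul_self_nonneg _] at hu
  exact Prod.ext hp (funext fun i => mul_self_eq_zero.mp (hu i (Finset.mem_univ i)))

lemma two_dvd_inter_add_Kcl {r : ℕ} (β : ℤ × (Fin r → ℤ)) : 2 ∣ inter β (β + Kcl r) := by
  have key (n : ℤ) : 2 ∣ n * (n + -1) := by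
    simpa [sub_eq_add_neg] using (Int.even_mul_pred_self n).two_dvd
  simp only [inter, Kcl, Prod.fst_add, Prod.snd_add, Pi.add_apply]
  refine dvd_sub ?_ (Finset.dvd_sum fun i _ => key _)
  have h := key β.1
  have : β.1 * (β.1 + -3) = β.1 * (β.1 + -1) - 2 * β.1 := by ring
  rw [this]
  exact dvd_sub h (dvd_mul_right 2 _)

/-- a big class of arithmetic genus `1` pairing at least `1` with every
line class and non-negatively with every conic class equals `−K`. -/
theorem genus_one_class_is_anticanonical (r : ℕ) (hr : r ≤ 8)
    (β : ℤ × (Fin r → ℤ)) (hbig : 0 < inter β β) (hpa : pa β = 1)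
    (hline : ∀ l : ℤ × (Fin r → ℤ), IsLine l → 1 ≤ inter β l)
    (hconic : ∀ C : ℤ × (Fin r → ℤ), IsConic C → 0 ≤ inter β C) :
    β = -(Kcl r) := by
  have h0 : inter β (β + Kcl r) = 0 := by
    have := two_dvd_inter_add_Kcl β
    simp only [pa] at hpa
    omega
  rcases Nat.lt_or_ge r 2 with h2 | h2
  · obtain rfl | rfl : r = 0 ∨ r = 1 := by omega
    · simp [inter, Kcl] at h0 hbig
      refine Prod.ext ?_ (Subsingleton.elim _ _)
      simp only [Kcl, Prod.fst_neg]
      rcases h0 with h | h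
      · exact absurd h hbig
      · linarith
    · have ha := hline _ (isLine_exc 0)
      rw [inter_exc] at ha
      have hc := hconic (1, fun _ => 1) (by constructor <;> simp [inter, Kcl])
      simp [inter, Kcl] at h0 hbig hc
      obtain ⟨d, a⟩ := β
      simp only at *
      have hfac : (d - a 0 - 1) * (d + a 0 - 2) = 2 := by linarith
      have hle : d + a 0 - 2 ≤ 2 :=
        Int.le_of_dvd (by norm_num) ⟨d - a 0 - 1, by linarith⟩
      have hd : d = 3 ∧ a 0 = 1 := by
        have b1 : a 0 ≤ 2 := by omega
        have b2 : d ≤ 3 := by omega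
        have b3 : 1 ≤ d := by omega
        generalize a 0 = b at *
        interval_cases b <;> interval_cases d <;> simp_all
      refine Prod.ext (by simpa [Kcl] using hd.1) (funext fun i => ?_)
      rw [Subsingleton.elim i 0]
      simpa [Kcl] using hd.2
  · have hD : β + Kcl r = 0 := by
      refine hodge_index hbig (by rw [inter_comm, h0]) (inter_self_nonneg h2 hr _ fun l hl => ?_)
      have h1 := hline l hl
      have hK := hl.2
      rw [inter_neg_left] at hK
      rw [inter_add_left]
      linarith
    exact eq_neg_of_add_eq_zero_left hD
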